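/- arXiv:2303.09090 — 2 statements merged into one kernel-verified Lean document; each statement's English description precedes it below -/
import Mathlib

section
/- Let 0 ≤ p ≤ n be integers, r > 0, and let u : Δⁿ_p(r) → [0,∞] be convex. Then for every r' with r/2 ≤ r' < r and every x ∈ Δⁿ_p(r') with x_i > 0 for all 1 ≤ i ≤ p, one has (r − r')ⁿ · (∏_{i=1}^p x_i) · u(x) ≤ (r')^p · ∫_{Δⁿ_p(r)} u dλⁿ. -/
open MeasureTheory
open scoped ENNReal

/-- A `[0,∞]`-valued function on a set `K ⊆ ℝⁿ` is convex if
`u((1−t)x+ty) ≤ (1−t)u(x)+t·u(y)` in `[0,∞]` for all `x, y ∈ K` and `t ∈ [0,1]`. -/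
def ConvexFnOn {n : ℕ} (K : Set (Fin n → ℝ)) (u : (Fin n → ℝ) → ℝ≥0∞) : Prop :=
  ∀ ⦃x⦄, x ∈ K → ∀ ⦃y⦄, y ∈ K → ∀ ⦃t : ℝ⦄, 0 ≤ t → t ≤ 1 →
    u ((1 - t) • x + t • y) ≤ ENNReal.ofReal (1 - t) * u x + ENNReal.ofReal t * u y

/-- `Δⁿ_p(r) = { x ∈ [0,∞)^p × (−r,r)^{n−p} : x₁+⋯+x_p < r }`. -/
def stdSlab (n p : ℕ) (r : ℝ) : Set (Fin n → ℝ) :=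
  {x | (∀ i : Fin n, (i : ℕ) < p → 0 ≤ x i) ∧
       (∀ i : Fin n, p ≤ (i : ℕ) → x i ∈ Set.Ioo (-r) r) ∧
       ∑ i ∈ Finset.univ.filter (fun i : Fin n => (i : ℕ) < p), x i < r}

/-!
A convex `u` satisfies `2 u(x) ≤ u(y) + u(2x - y)`. Integrating this over a set that is symmetric
about `x` shows that `u(x)` is at most the mean of `u` over that set. For `x` in the slab of radius
`r'`, apply this to the box centred at `x` with half-widths `(r - r') xᵢ / r'` for `i ≤ p` and
`r - r'` for `i > p`. Its points have first coordinates between `0` (this is where `r ≤ 2r'`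
enters) and `(r / r') xᵢ`, so it lies in the slab of radius `r`.
-/

open scoped NNReal

section ConvexOn

variable {E : Type*} {K : Set E} {u : E → ℝ≥0∞} {x : E}

lemma two_mul_le_add_pointReflection_of_convexOn [AddCommGroup E] [Module ℝ E]
    (hu : ConvexOn ℝ≥0 K u) {y : E} (hy : y ∈ K) (hy' : Equiv.pointReflection x y ∈ K) :
    2 * u x ≤ u y + u (Equiv.pointReflection x y) := by
  have hmid : (2⁻¹ : ℝ≥0) • y + (2⁻¹ : ℝ≥0) • Equiv.pointReflection x y = x := by
    rw [← smul_add, Equiv.pointReflection_apply, vsub_eq_sub, vadd_eq_add,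
      inv_smul_eq_iff₀ two_ne_zero, two_smul]
    abel
  calc 2 * u x
      = 2 * u ((2⁻¹ : ℝ≥0) • y + (2⁻¹ : ℝ≥0) • Equiv.pointReflection x y) := by rw [hmid]
    _ ≤ 2 * ((2⁻¹ : ℝ≥0) • u y + (2⁻¹ : ℝ≥0) • u (Equiv.pointReflection x y)) := by
        gcongr
        exact hu.2 hy hy' zero_le zero_le (by rw [← two_mul, mul_inv_cancel₀ two_ne_zero])
    _ = u y + u (Equiv.pointReflection x y) := by
        rw [← smul_add, ENNReal.smul_def, smul_eq_mul, ENNReal.coe_inv two_ne_zero,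
          ENNReal.coe_ofNat, ENNReal.mul_inv_cancel_left two_ne_zero ENNReal.ofNat_ne_top]

lemma measurePreserving_pointReflection [AddCommGroup E] [MeasurableSpace E] [MeasurableAdd E]
    [MeasurableNeg E] (μ : Measure E) [μ.IsNegInvariant] [μ.IsAddLeftInvariant] (x : E) :
    MeasurePreserving (Equiv.pointReflection x) μ μ := by
  have h : ⇑(Equiv.pointReflection x) = fun y ↦ (x + x) - y := by
    ext y
    rw [Equiv.pointReflection_apply, vsub_eq_sub, vadd_eq_add]
    abel
  exact h ▸ Measure.measurePreserving_sub_left μ (x + x)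

variable [NormedAddCommGroup E] [NormedSpace ℝ E] [FiniteDimensional ℝ E] [MeasurableSpace E]
  [BorelSpace E]

lemma aemeasurable_restrict_of_convexOn (hu : ConvexOn ℝ≥0 K u) (μ : Measure E)
    [μ.IsAddHaarMeasure] : AEMeasurable u (μ.restrict K) := by
  have hK : NullMeasurableSet K μ := (NNReal.convex_iff.mp hu.1).nullMeasurableSet μ
  have hIic (c : ℝ≥0∞) : NullMeasurableSet (u ⁻¹' Set.Iic c) (μ.restrict K) := by
    rw [nullMeasurableSet_restrict hK, Set.inter_comm]
    exact (NNReal.convex_iff.mp (hu.convex_le c)).nullMeasurableSet μ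
  have hnull : NullMeasurable u (μ.restrict K) := fun _ hs ↦
    measurable_of_Iic (δ := NullMeasurableSpace E (μ.restrict K)) hIic hs
  exact hnull.aemeasurable

theorem measure_mul_le_setLIntegral_of_convexOn (hu : ConvexOn ℝ≥0 K u) (μ : Measure E)
    [μ.IsAddHaarMeasure] {B : Set E} (hB : NullMeasurableSet B μ) (hBK : B ⊆ K)
    (hsymm : Set.MapsTo (Equiv.pointReflection x) B B) :
    μ B * u x ≤ ∫⁻ y in B, u y ∂μ := by
  have hu_meas : AEMeasurable u (μ.restrict B) :=
    (aemeasurable_restrict_of_convexOn hu μ).mono_measure (Measure.restrict_mono hBK le_rfl)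
  have hmp := measurePreserving_pointReflection μ x
  have hreflect : ∫⁻ y in B, u (Equiv.pointReflection x y) ∂μ ≤ ∫⁻ y in B, u y ∂μ :=
    calc ∫⁻ y in B, u (Equiv.pointReflection x y) ∂μ
        ≤ ∫⁻ y in Equiv.pointReflection x ⁻¹' B, u (Equiv.pointReflection x y) ∂μ :=
          lintegral_mono_set hsymm
      _ = ∫⁻ y in B, u y ∂μ :=
          hmp.setLIntegral_comp_preimage_emb
            (Homeomorph.pointReflection x).measurableEmbedding u B
  have htwice : 2 * (μ B * u x) ≤ 2 * ∫⁻ y in B, u y ∂μ :=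
    calc 2 * (μ B * u x)
        = ∫⁻ _ in B, 2 * u x ∂μ := by rw [setLIntegral_const]; ring
      _ ≤ ∫⁻ y in B, (u y + u (Equiv.pointReflection x y)) ∂μ := by
          refine lintegral_mono_ae ((ae_restrict_mem₀ hB).mono fun y hy ↦ ?_)
          exact two_mul_le_add_pointReflection_of_convexOn hu (hBK hy) (hBK (hsymm hy))
      _ = ∫⁻ y in B, u y ∂μ + ∫⁻ y in B, u (Equiv.pointReflection x y) ∂μ :=
          lintegral_add_left' hu_meas _
      _ ≤ 2 * ∫⁻ y in B, u y ∂μ := by rw [two_mul]; gcongr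
  exact (ENNReal.mul_le_mul_iff_right two_ne_zero ENNReal.ofNat_ne_top).mp htwice

end ConvexOn

lemma mapsTo_pointReflection_Icc_sub_add {α : Type*} [AddCommGroup α] [PartialOrder α]
    [IsOrderedAddMonoid α] (x a : α) :
    Set.MapsTo (Equiv.pointReflection x) (Set.Icc (x - a) (x + a)) (Set.Icc (x - a) (x + a)) := by
  rintro y ⟨hxy, hyx⟩
  rw [Equiv.pointReflection_apply, vsub_eq_sub, vadd_eq_add, Set.mem_Icc, add_comm _ x,
    add_le_add_iff_left, sub_eq_add_neg, add_le_add_iff_left, neg_le_sub_iff_le_add,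
    sub_le_comm]
  exact ⟨hyx, hxy⟩

lemma volume_Icc_sub_add {ι : Type*} [Fintype ι] (x : ι → ℝ) {a : ι → ℝ} (ha : 0 ≤ a) :
    volume (Set.Icc (x - a) (x + a)) = ENNReal.ofReal (∏ i, 2 * a i) := by
  rw [Real.volume_Icc_pi, ENNReal.ofReal_prod_of_nonneg fun i _ ↦ mul_nonneg two_pos.le (ha i)]
  refine Finset.prod_congr rfl fun i _ ↦ congrArg ENNReal.ofReal ?_
  rw [Pi.add_apply, Pi.sub_apply]
  ring

lemma ConvexFnOn.convexOn {n : ℕ} {K : Set (Fin n → ℝ)} {u : (Fin n → ℝ) → ℝ≥0∞}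
    (hu : ConvexFnOn K u) (hK : Convex ℝ K) : ConvexOn ℝ≥0 K u := by
  refine ⟨NNReal.convex_iff.mpr hK, fun x hx y hy s t _ _ hst ↦ ?_⟩
  have hs : (s : ℝ) = 1 - t := eq_sub_of_add_eq (mod_cast hst)
  have ht : (t : ℝ) ≤ 1 := by linarith [s.coe_nonneg]
  simpa only [← hs, ENNReal.ofReal_coe_nnreal] using! hu hx hy t.coe_nonneg ht

lemma convex_stdSlab (n p : ℕ) (r : ℝ) : Convex ℝ (stdSlab n p r) := by
  rintro x ⟨hx₀, hxr, hx_sum⟩ y ⟨hy₀, hyr, hy_sum⟩ s t hs ht hst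
  refine ⟨fun i hi ↦ convex_Ici (0 : ℝ) (hx₀ i hi) (hy₀ i hi) hs ht hst,
    fun i hi ↦ convex_Ioo (-r) r (hxr i hi) (hyr i hi) hs ht hst, ?_⟩
  simp only [Pi.add_apply, Pi.smul_apply, Finset.sum_add_distrib, ← Finset.smul_sum]
  exact convex_Iio r hx_sum hy_sum hs ht hst

section Box

variable {n p : ℕ} {r r' : ℝ} {x : Fin n → ℝ}

/-- The half-widths of a box centred at a point `x` of `stdSlab n p r'` and contained in
`stdSlab n p r`. -/
noncomputable def slabHalfWidth (p : ℕ) (r r' : ℝ) (x : Fin n → ℝ) (i : Fin n) : ℝ :=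
  if (i : ℕ) < p then (r - r') * x i / r' else r - r'

lemma slabHalfWidth_of_lt {i : Fin n} (hi : (i : ℕ) < p) :
    slabHalfWidth p r r' x i = (r - r') * x i / r' :=
  if_pos hi

lemma slabHalfWidth_of_le {i : Fin n} (hi : p ≤ (i : ℕ)) : slabHalfWidth p r r' x i = r - r' :=
  if_neg hi.not_gt

lemma slabHalfWidth_nonneg (hr' : 0 ≤ r') (hrr' : r' ≤ r)
    (hx : ∀ i : Fin n, (i : ℕ) < p → 0 ≤ x i) : 0 ≤ slabHalfWidth p r r' x := by
  intro i
  have hsub : 0 ≤ r - r' := sub_nonneg.mpr hrr'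
  rcases lt_or_ge (i : ℕ) p with hi | hi
  · rw [slabHalfWidth_of_lt hi]
    exact div_nonneg (mul_nonneg hsub (hx i hi)) hr'
  · rwa [slabHalfWidth_of_le hi]

lemma add_slabHalfWidth_of_lt (hr' : r' ≠ 0) {i : Fin n} (hi : (i : ℕ) < p) :
    x i + slabHalfWidth p r r' x i = r / r' * x i := by
  rw [slabHalfWidth_of_lt hi]
  field_simp
  ring

lemma slabHalfWidth_le_of_lt (hr' : 0 < r') (hr : r / 2 ≤ r') {i : Fin n} (hi : (i : ℕ) < p)
    (hx : 0 ≤ x i) : slabHalfWidth p r r' x i ≤ x i := by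
  rw [slabHalfWidth_of_lt hi, div_le_iff₀ hr', mul_comm (x i)]
  exact mul_le_mul_of_nonneg_right (by linarith) hx

lemma Icc_slabHalfWidth_subset_stdSlab (hr : r / 2 ≤ r') (hrr' : r' < r)
    (hx : x ∈ stdSlab n p r') :
    Set.Icc (x - slabHalfWidth p r r' x) (x + slabHalfWidth p r r' x) ⊆ stdSlab n p r := by
  obtain ⟨hx₀, hxr, hx_sum⟩ := hx
  have hr_pos : 0 < r := by linarith
  have hr'_pos : 0 < r' := by linarith
  rintro y ⟨hxy, hyx⟩
  refine ⟨fun i hi ↦ ?_, fun i hi ↦ ?_, ?_⟩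
  · exact (sub_nonneg.mpr (slabHalfWidth_le_of_lt hr'_pos hr hi (hx₀ i hi))).trans (hxy i)
  · have hlower := hxy i
    have hupper := hyx i
    rw [Pi.sub_apply, slabHalfWidth_of_le hi] at hlower
    rw [Pi.add_apply, slabHalfWidth_of_le hi] at hupper
    obtain ⟨hneg, hpos⟩ := hxr i hi
    exact ⟨by linarith, by linarith⟩
  · calc ∑ i : Fin n with i.val < p, y i
        ≤ ∑ i : Fin n with i.val < p, r / r' * x i := Finset.sum_le_sum fun i hi ↦
          (hyx i).trans_eq (add_slabHalfWidth_of_lt hr'_pos.ne' (Finset.mem_filter.mp hi).2)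
      _ = r / r' * ∑ i : Fin n with i.val < p, x i := (Finset.mul_sum _ _ _).symm
      _ < r / r' * r' := by gcongr
      _ = r := div_mul_cancel₀ r hr'_pos.ne'

lemma pow_mul_prod_two_mul_slabHalfWidth (hpn : p ≤ n) (hr' : r' ≠ 0) :
    r' ^ p * ∏ i, 2 * slabHalfWidth p r r' x i =
      (2 * (r - r')) ^ n * ∏ i : Fin n with i.val < p, x i := by
  have hpow : r' ^ p = ∏ i : Fin n, if (i : ℕ) < p then r' else 1 := by
    rw [← Finset.prod_filter, Finset.prod_const, Fin.card_filter_val_lt, min_eq_right hpn]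
  rw [hpow, ← Fin.prod_const, Finset.prod_filter, ← Finset.prod_mul_distrib,
    ← Finset.prod_mul_distrib]
  refine Finset.prod_congr rfl fun i _ ↦ ?_
  rcases lt_or_ge (i : ℕ) p with hi | hi
  · rw [slabHalfWidth_of_lt hi, if_pos hi, if_pos hi]
    field_simp
  · rw [slabHalfWidth_of_le hi, if_neg hi.not_gt, if_neg hi.not_gt]
    ring

end Box

theorem convenient_mean_value_estimate_general {n p : ℕ} (hpn : p ≤ n) {r r' : ℝ}
    (hr : r / 2 ≤ r') (hrr' : r' < r) {u : (Fin n → ℝ) → ℝ≥0∞}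
    (hu : ConvexFnOn (stdSlab n p r) u) {x : Fin n → ℝ} (hx : x ∈ stdSlab n p r') :
    ENNReal.ofReal ((2 * (r - r')) ^ n * ∏ i : Fin n with i.val < p, x i) * u x ≤
      ENNReal.ofReal (r' ^ p) * ∫⁻ y in stdSlab n p r, u y := by
  have hr' : 0 < r' := by linarith
  set a := slabHalfWidth p r r' x
  have ha : 0 ≤ a := slabHalfWidth_nonneg hr'.le hrr'.le hx.1
  have hbox : Set.Icc (x - a) (x + a) ⊆ stdSlab n p r :=
    Icc_slabHalfWidth_subset_stdSlab hr hrr' hx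
  have hmean : volume (Set.Icc (x - a) (x + a)) * u x ≤ ∫⁻ y in Set.Icc (x - a) (x + a), u y :=
    measure_mul_le_setLIntegral_of_convexOn (hu.convexOn (convex_stdSlab n p r)) volume
      measurableSet_Icc.nullMeasurableSet hbox (mapsTo_pointReflection_Icc_sub_add x a)
  rw [← pow_mul_prod_two_mul_slabHalfWidth hpn hr'.ne', ENNReal.ofReal_mul (by positivity),
    ← volume_Icc_sub_add x ha, mul_assoc]
  gcongr
  exact hmean.trans (lintegral_mono_set hbox)

/-- For a convex `u : Δⁿ_p(r) → [0,∞]`, `r/2 ≤ r' < r` and `x ∈ Δⁿ_p(r')`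
with positive first `p` coordinates,
`(r−r')ⁿ · (∏_{i<p} xᵢ) · u(x) ≤ (r')^p · ∫_{Δⁿ_p(r)} u dλⁿ`. -/
theorem convenient_mean_value_estimate (n p : ℕ) (hpn : p ≤ n) (r r' : ℝ)
    (hr : 0 < r) (hr1 : r / 2 ≤ r') (hr2 : r' < r)
    (u : (Fin n → ℝ) → ℝ≥0∞) (hu : ConvexFnOn (stdSlab n p r) u) :
    ∀ x ∈ stdSlab n p r', (∀ i : Fin n, (i : ℕ) < p → 0 < x i) →
      ENNReal.ofReal ((r - r') ^ n *
          ∏ i ∈ Finset.univ.filter (fun i : Fin n => (i : ℕ) < p), x i) * u x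
        ≤ ENNReal.ofReal (r' ^ p) * ∫⁻ y in stdSlab n p r, u y := by
  intro x hx _
  refine le_trans ?_ (convenient_mean_value_estimate_general hpn hr1 hr2 hu hx)
  gcongr
  · exact Finset.prod_nonneg fun i hi ↦ hx.1 i (Finset.mem_filter.mp hi).2
  · linarith
end

section
/- Let 2 ≤ p ≤ n be integers, r > 0, and let u : Δⁿ_p(r) → [0,∞] be convex. Then for all i ≠ j in {1,…,p} and every x ∈ Δⁿ_p(r/2) with (x_i,x_j) ≠ (0,0) and x_k > 0 for every k ∈ {1,…,p} ∖ {i,j}, one has (r/2)^{n−p} · (x_i + x_j)² · (∏_{k ∈ {1,…,p}∖{i,j}} x_k) · u(x) ≤ x_j · ∫_{∂_iΔⁿ_p(r)} u dx' + x_i · ∫_{∂_jΔⁿ_p(r)} u dx'. -/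
open MeasureTheory
open scoped ENNReal

/-- The `(n−1)`-dimensional Lebesgue measure on the hyperplane `{xᵢ = 0} ⊆ ℝⁿ`,
realized as the product of Lebesgue measures in the coordinates `j ≠ i` with the
Dirac mass at `0` in the coordinate `i`. -/
noncomputable def hyperplaneMeasure (n : ℕ) (i : Fin n) : Measure (Fin n → ℝ) :=
  Measure.pi (fun j => if j = i then Measure.dirac 0 else volume)

/-- `∂ᵢΔⁿ_p(r) = { x ∈ Δⁿ_p(r) : xᵢ = 0 }`. -/
def slabFace (n p : ℕ) (r : ℝ) (i : Fin n) : Set (Fin n → ℝ) :=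
  {x ∈ stdSlab n p r | x i = 0}

/-- `∫_{∂ᵢΔⁿ_p(r)} u dx'`, the integral of `u` over the boundary face `∂ᵢΔⁿ_p(r)`
with respect to the `(n−1)`-dimensional Lebesgue measure of the hyperplane `{xᵢ=0}`. -/
noncomputable def faceIntegral (n p : ℕ) (r : ℝ) (i : Fin n)
    (u : (Fin n → ℝ) → ℝ≥0∞) : ℝ≥0∞ :=
  ∫⁻ x in slabFace n p r i, u x ∂(hyperplaneMeasure n i)

/-!
The sum `xᵢ + xⱼ` can be carried by either coordinate alone, which gives a point `a` of the face
`{xᵢ = 0}` and a point `b` of the face `{xⱼ = 0}` with `(xᵢ + xⱼ) x = xⱼ a + xᵢ b`; so it suffices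
to bound `u a` and `u b`. In `{xᵢ = 0}`, the box centred at `a` which reaches down to `0` in the
first `p` coordinates and has side `r` in the others lies in the face, because doubling the first
`p` coordinates of `a` keeps their sum below `r`. By convexity and reflection in `a`, the value
`u a` is at most the mean of `u` over this box.
-/

lemma measure_mul_le_setLIntegral_of_measurePreserving {α : Type*} [MeasurableSpace α]
    {μ : Measure α} {s : Set α} {v : α → ℝ≥0∞} {c : ℝ≥0∞} {σ : α → α}
    (hσ : MeasurePreserving σ μ μ) (hσe : MeasurableEmbedding σ) (hσs : σ ⁻¹' s = s)
    (hs : MeasurableSet s) (hv : AEMeasurable v (μ.restrict s))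
    (hc : ∀ y ∈ s, 2 * c ≤ v y + v (σ y)) :
    μ s * c ≤ ∫⁻ y in s, v y ∂μ := by
  have hcomp : ∫⁻ y in s, v (σ y) ∂μ = ∫⁻ y in s, v y ∂μ := by
    simpa only [hσs] using hσ.setLIntegral_comp_preimage_emb hσe v s
  have htwice : 2 * (μ s * c) ≤ 2 * ∫⁻ y in s, v y ∂μ :=
    calc 2 * (μ s * c) = ∫⁻ _ in s, 2 * c ∂μ := by rw [setLIntegral_const]; ring
      _ ≤ ∫⁻ y in s, v y + v (σ y) ∂μ := setLIntegral_mono' hs hc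
      _ = ∫⁻ y in s, v y ∂μ + ∫⁻ y in s, v (σ y) ∂μ := lintegral_add_left' hv _
      _ = 2 * ∫⁻ y in s, v y ∂μ := by rw [hcomp, two_mul]
  exact (ENNReal.mul_le_mul_iff_right two_ne_zero ENNReal.ofNat_ne_top).1 htwice

lemma aemeasurable_restrict_of_quasiconvexOn {E β : Type*} [NormedAddCommGroup E]
    [NormedSpace ℝ E] [FiniteDimensional ℝ E] [MeasurableSpace E] [BorelSpace E] (μ : Measure E)
    [μ.IsAddHaarMeasure] [LinearOrder β] [TopologicalSpace β] [OrderTopology β]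
    [SecondCountableTopology β] [MeasurableSpace β] [BorelSpace β] {s : Set E} {f : E → β}
    (hf : QuasiconvexOn ℝ s f) : AEMeasurable f (μ.restrict s) := by
  have hsublevel (c : β) : NullMeasurableSet (f ⁻¹' Set.Iic c) (μ.restrict s) := by
    rw [nullMeasurableSet_restrict (hf.convex.nullMeasurableSet μ), Set.inter_comm]
    exact (hf c).nullMeasurableSet μ
  exact NullMeasurable.aemeasurable (measurable_of_Iic hsublevel)

namespace ConvexFnOn

variable {n : ℕ} {K L : Set (Fin n → ℝ)} {u : (Fin n → ℝ) → ℝ≥0∞} {x y z : Fin n → ℝ}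

lemma mono (hu : ConvexFnOn K u) (hLK : L ⊆ K) : ConvexFnOn L u :=
  fun _ hx _ hy _ ht ht' => hu (hLK hx) (hLK hy) ht ht'

lemma ofReal_add_mul_le (hu : ConvexFnOn K u) (hx : x ∈ K) (hy : y ∈ K) {α β : ℝ}
    (hα : 0 ≤ α) (hβ : 0 ≤ β) (hz : (α + β) • z = α • x + β • y) :
    ENNReal.ofReal (α + β) * u z ≤ ENNReal.ofReal α * u x + ENNReal.ofReal β * u y := by
  rcases (add_nonneg hα hβ).eq_or_lt with hsum | hsum
  · simp [← hsum]
  have hα' : (α + β) * (1 - β / (α + β)) = α := by field_simp; ring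
  have hβ' : (α + β) * (β / (α + β)) = β := by field_simp
  have hz' : (1 - β / (α + β)) • x + (β / (α + β)) • y = z := by
    refine smul_right_injective _ hsum.ne' ?_
    simp only [smul_add, smul_smul, hα', hβ', hz]
  have hle : β / (α + β) ≤ 1 := (div_le_one hsum).2 (by linarith)
  calc ENNReal.ofReal (α + β) * u z
      ≤ ENNReal.ofReal (α + β) * (ENNReal.ofReal (1 - β / (α + β)) * u x
          + ENNReal.ofReal (β / (α + β)) * u y) := by
        gcongr
        simpa only [hz'] using hu hx hy (div_nonneg hβ hsum.le) hle
    _ = ENNReal.ofReal α * u x + ENNReal.ofReal β * u y := by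
        rw [mul_add, ← mul_assoc, ← mul_assoc, ← ENNReal.ofReal_mul hsum.le,
          ← ENNReal.ofReal_mul hsum.le, hα', hβ']

lemma quasiconvexOn (hu : ConvexFnOn K u) (hK : Convex ℝ K) : QuasiconvexOn ℝ K u := by
  refine quasiconvexOn_iff_le_max.2 ⟨hK, fun x hx y hy α β hα hβ hαβ => ?_⟩
  have hle := hu.ofReal_add_mul_le hx hy hα hβ (z := α • x + β • y) (by rw [hαβ, one_smul])
  calc u (α • x + β • y) ≤ ENNReal.ofReal α * u x + ENNReal.ofReal β * u y := by
        simpa only [hαβ, ENNReal.ofReal_one, one_mul] using hle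
    _ ≤ ENNReal.ofReal α * max (u x) (u y) + ENNReal.ofReal β * max (u x) (u y) := by
        gcongr
        exacts [le_max_left _ _, le_max_right _ _]
    _ = max (u x) (u y) := by
        rw [← add_mul, ← ENNReal.ofReal_add hα hβ, hαβ, ENNReal.ofReal_one, one_mul]

end ConvexFnOn

instance sigmaFinite_ite {α : Type*} [MeasurableSpace α] (P : Prop) [Decidable P]
    (μ ν : Measure α) [SigmaFinite μ] [SigmaFinite ν] : SigmaFinite (if P then μ else ν) := by
  split_ifs <;> infer_instance

section HyperplaneMeasure

variable {n : ℕ}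

/-- The inclusion of the hyperplane `{xᵢ = 0}`, parametrised by its remaining coordinates, into
`ℝⁿ⁺¹`. -/
def hyperplaneInclusion (i : Fin (n + 1)) : (Fin n → ℝ) →ₗ[ℝ] (Fin (n + 1) → ℝ) where
  toFun := i.insertNth (α := fun _ => ℝ) 0
  map_add' x y := by rw [← Fin.insertNth_add, add_zero]
  map_smul' c x := by
    ext k
    cases k using Fin.succAboveCases i <;> simp

lemma measurableEmbedding_hyperplaneInclusion (i : Fin (n + 1)) :
    MeasurableEmbedding (hyperplaneInclusion i) :=
  (MeasurableEquiv.piFinSuccAbove (fun _ => ℝ) i).symm.measurableEmbedding.comp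
    (MeasurableEmbedding.prodMk_left 0 .id)

lemma hyperplaneMeasure_eq_map_hyperplaneInclusion (i : Fin (n + 1)) :
    hyperplaneMeasure (n + 1) i = volume.map (hyperplaneInclusion i) := by
  have hmap := (measurePreserving_piFinSuccAbove
    (fun j => if j = i then Measure.dirac (0 : ℝ) else volume) i).symm.map_eq
  simp only [if_true, Fin.succAbove_ne, if_false, Measure.dirac_prod] at hmap
  rw [Measure.map_map (MeasurableEquiv.measurable _) (by fun_prop)] at hmap
  exact hmap.symm

lemma hyperplaneMeasure_Icc {i : Fin n} {a b : Fin n → ℝ} (hai : a i ≤ 0) (hbi : 0 ≤ b i) :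
    hyperplaneMeasure n i (Set.Icc a b) =
      ∏ k ∈ Finset.univ.erase i, ENNReal.ofReal (b k - a k) := by
  rw [hyperplaneMeasure, ← Set.pi_univ_Icc, Measure.pi_pi,
    ← Finset.mul_prod_erase _ _ (Finset.mem_univ i), if_pos rfl,
    Measure.dirac_apply_of_mem (Set.mem_Icc.2 ⟨hai, hbi⟩), one_mul]
  refine Finset.prod_congr rfl fun k hk => ?_
  rw [if_neg (Finset.ne_of_mem_erase hk), Real.volume_Icc]

lemma measurePreserving_hyperplaneMeasure_sub_left {i : Fin n} {a : Fin n → ℝ} (hai : a i = 0) :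
    MeasurePreserving (fun x => a - x) (hyperplaneMeasure n i) (hyperplaneMeasure n i) := by
  refine measurePreserving_pi _ _ (f := fun k t => a k - t) fun k => ?_
  split_ifs with hk
  · subst hk
    refine ⟨by fun_prop, ?_⟩
    simp [Measure.map_dirac, hai]
  · exact Measure.measurePreserving_sub_left volume (a k)

end HyperplaneMeasure

lemma ConvexFnOn.aemeasurable_hyperplaneMeasure {n : ℕ} {K : Set (Fin n → ℝ)}
    {u : (Fin n → ℝ) → ℝ≥0∞} (hu : ConvexFnOn K u) (hK : Convex ℝ K) (i : Fin n) :
    AEMeasurable u ((hyperplaneMeasure n i).restrict K) := by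
  obtain ⟨m, rfl⟩ : ∃ m, n = m + 1 := ⟨n - 1, by have := i.pos; omega⟩
  have hι := measurableEmbedding_hyperplaneInclusion i
  have hquasi : QuasiconvexOn ℝ (hyperplaneInclusion i ⁻¹' K) (u ∘ hyperplaneInclusion i) :=
    fun c => (hu.quasiconvexOn hK c).linear_preimage (hyperplaneInclusion i)
  rw [hyperplaneMeasure_eq_map_hyperplaneInclusion, hι.restrict_map, hι.aemeasurable_map_iff]
  exact aemeasurable_restrict_of_quasiconvexOn volume hquasi

lemma ConvexFnOn.hyperplaneMeasure_Icc_mul_le {n : ℕ} {u : (Fin n → ℝ) → ℝ≥0∞} {a w : Fin n → ℝ}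
    (hu : ConvexFnOn (Set.Icc (a - w) (a + w)) u) {i : Fin n} (hai : a i = 0) :
    hyperplaneMeasure n i (Set.Icc (a - w) (a + w)) * u a ≤
      ∫⁻ x in Set.Icc (a - w) (a + w), u x ∂hyperplaneMeasure n i := by
  have hrefl : (fun x => a + a - x) ⁻¹' Set.Icc (a - w) (a + w) = Set.Icc (a - w) (a + w) := by
    rw [Set.preimage_const_sub_Icc]
    congr 1 <;> abel
  refine measure_mul_le_setLIntegral_of_measurePreserving
    (measurePreserving_hyperplaneMeasure_sub_left (by simp [hai])) (measurableEmbedding_subLeft _)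
    hrefl measurableSet_Icc (hu.aemeasurable_hyperplaneMeasure (convex_Icc _ _) i) fun y hy => ?_
  have hmid := hu.ofReal_add_mul_le (z := a) hy (hrefl.symm.subset hy) zero_le_one zero_le_one
    (by module)
  simpa [one_add_one_eq_two] using hmid

section Slab

variable {n p : ℕ} {r : ℝ} {i j : Fin n} {x : Fin n → ℝ} {u : (Fin n → ℝ) → ℝ≥0∞}

lemma pos_of_mem_stdSlab (hx : x ∈ stdSlab n p r) : 0 < r :=
  (Finset.sum_nonneg fun k hk => hx.1 k (Finset.mem_filter.1 hk).2).trans_lt hx.2.2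

lemma stdSlab_half_subset : stdSlab n p (r / 2) ⊆ stdSlab n p r := by
  intro x hx
  have hr := pos_of_mem_stdSlab hx
  exact ⟨hx.1, fun k hk => Set.Ioo_subset_Ioo (by linarith) (by linarith) (hx.2.1 k hk),
    hx.2.2.trans (by linarith)⟩

/-- The half side lengths of the box about `a ∈ Δⁿ_p(r/2)` on which `u a` is compared with the
mean of `u`. -/
noncomputable def boxRadius (p : ℕ) (r : ℝ) (a : Fin n → ℝ) : Fin n → ℝ :=
  fun k => if (k : ℕ) < p then a k else r / 2

lemma Icc_boxRadius_subset_stdSlab (hx : x ∈ stdSlab n p (r / 2)) :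
    Set.Icc (x - boxRadius p r x) (x + boxRadius p r x) ⊆ stdSlab n p r := by
  rintro y ⟨hlo, hhi⟩
  have hlow (k) : x k - boxRadius p r x k ≤ y k := hlo k
  have hupp (k) : y k ≤ x k + boxRadius p r x k := hhi k
  refine ⟨fun k hk => ?_, fun k hk => ?_, ?_⟩
  · simpa [boxRadius, hk] using hlow k
  · have hlow_k := hlow k
    have hupp_k := hupp k
    have hxk := hx.2.1 k hk
    simp only [boxRadius, hk.not_gt, if_false] at hlow_k hupp_k
    exact ⟨by linarith [hxk.1], by linarith [hxk.2]⟩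
  · calc ∑ k ∈ Finset.univ.filter (fun k : Fin n => (k : ℕ) < p), y k
        ≤ ∑ k ∈ Finset.univ.filter (fun k : Fin n => (k : ℕ) < p), 2 * x k := by
          refine Finset.sum_le_sum fun k hk => (hupp k).trans_eq ?_
          rw [boxRadius, if_pos (Finset.mem_filter.1 hk).2, two_mul]
      _ < r := by rw [← Finset.mul_sum]; linarith [hx.2.2]

lemma Icc_boxRadius_subset_slabFace (hi : (i : ℕ) < p) (hx : x ∈ stdSlab n p (r / 2))
    (hxi : x i = 0) :
    Set.Icc (x - boxRadius p r x) (x + boxRadius p r x) ⊆ slabFace n p r i := by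
  refine fun y hy => ⟨Icc_boxRadius_subset_stdSlab hx hy, ?_⟩
  have hlow := hy.1 i
  have hupp := hy.2 i
  simp only [boxRadius, Pi.sub_apply, Pi.add_apply, if_pos hi, hxi, sub_zero, add_zero] at hlow hupp
  exact le_antisymm hupp hlow

lemma prod_erase_ite_lt {M : Type*} [CommMonoid M] (hpn : p ≤ n) (hi : (i : ℕ) < p) (c d : M)
    (f : Fin n → M) :
    ∏ k ∈ Finset.univ.erase i, (if (k : ℕ) < p then c * f k else d) =
      c ^ (p - 1) * d ^ (n - p) *
        ∏ k ∈ Finset.univ.filter (fun k : Fin n => (k : ℕ) < p ∧ k ≠ i), f k := by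
  have hlt : (Finset.univ.erase i).filter (fun k : Fin n => (k : ℕ) < p) =
      Finset.univ.filter (fun k : Fin n => (k : ℕ) < p ∧ k ≠ i) := by
    ext k
    simp [and_comm]
  have hcard_lt : (Finset.univ.filter (fun k : Fin n => (k : ℕ) < p ∧ k ≠ i)).card = p - 1 := by
    rw [← hlt, Finset.filter_erase, Finset.card_erase_of_mem (by simpa using hi),
      Fin.card_filter_val_lt, min_eq_right hpn]
  have hcard_ge : ((Finset.univ.erase i).filter (fun k : Fin n => ¬ (k : ℕ) < p)).card = n - p := by
    have htotal := Finset.card_filter_add_card_filter_not (s := Finset.univ.erase i)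
      (fun k : Fin n => (k : ℕ) < p)
    rw [hlt, hcard_lt, Finset.card_erase_of_mem (Finset.mem_univ i), Finset.card_fin] at htotal
    omega
  rw [Finset.prod_ite, Finset.prod_const, hcard_ge, hlt, Finset.prod_mul_distrib,
    Finset.prod_const, hcard_lt, mul_right_comm]

lemma hyperplaneMeasure_Icc_boxRadius (hpn : p ≤ n) (hi : (i : ℕ) < p)
    (hx : x ∈ stdSlab n p (r / 2)) (hxi : x i = 0) :
    hyperplaneMeasure n i (Set.Icc (x - boxRadius p r x) (x + boxRadius p r x)) =
      ENNReal.ofReal (2 ^ (p - 1) * r ^ (n - p) *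
        ∏ k ∈ Finset.univ.filter (fun k : Fin n => (k : ℕ) < p ∧ k ≠ i), x k) := by
  have hr := pos_of_mem_stdSlab hx
  have hri : boxRadius p r x i = 0 := by rw [boxRadius, if_pos hi, hxi]
  have hside (k : Fin n) : (x + boxRadius p r x) k - (x - boxRadius p r x) k =
      if (k : ℕ) < p then 2 * x k else r := by
    simp only [boxRadius, Pi.add_apply, Pi.sub_apply]
    split_ifs <;> ring
  have hside_nonneg (k : Fin n) : 0 ≤ if (k : ℕ) < p then 2 * x k else r := by
    split_ifs with hk
    · exact mul_nonneg zero_le_two (hx.1 k hk)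
    · linarith
  rw [hyperplaneMeasure_Icc (by simp [hri, hxi]) (by simp [hri, hxi])]
  simp only [hside]
  rw [← ENNReal.ofReal_prod_of_nonneg fun k _ => hside_nonneg k, prod_erase_ite_lt hpn hi]

lemma mul_le_faceIntegral_of_apply_eq_zero (hu : ConvexFnOn (stdSlab n p r) u)
    (hpn : p ≤ n) (hi : (i : ℕ) < p) (hx : x ∈ stdSlab n p (r / 2)) (hxi : x i = 0) :
    ENNReal.ofReal (2 ^ (p - 1) * r ^ (n - p) *
        ∏ k ∈ Finset.univ.filter (fun k : Fin n => (k : ℕ) < p ∧ k ≠ i), x k) * u x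
      ≤ faceIntegral n p r i u := by
  rw [← hyperplaneMeasure_Icc_boxRadius hpn hi hx hxi]
  exact ((hu.mono (Icc_boxRadius_subset_stdSlab hx)).hyperplaneMeasure_Icc_mul_le hxi).trans
    (lintegral_mono_set (Icc_boxRadius_subset_slabFace hi hx hxi))

/-- For `i ≠ j`, the point of the hyperplane `{xᵢ = 0}` obtained from `x` by adding its `i`-th
coordinate to the `j`-th one. -/
def moveCoord (i j : Fin n) (x : Fin n → ℝ) : Fin n → ℝ :=
  x + x i • (Pi.single j 1 - Pi.single i 1)

lemma moveCoord_apply_left (hij : i ≠ j) : moveCoord i j x i = 0 := by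
  simp [moveCoord, hij]

lemma moveCoord_apply_right (hij : i ≠ j) : moveCoord i j x j = x i + x j := by
  simp [moveCoord, hij.symm, add_comm]

lemma moveCoord_apply_of_ne {k : Fin n} (hki : k ≠ i) (hkj : k ≠ j) : moveCoord i j x k = x k := by
  simp [moveCoord, hki, hkj]

lemma add_smul_eq_smul_moveCoord_add_smul_moveCoord (i j : Fin n) (x : Fin n → ℝ) :
    (x j + x i) • x = x j • moveCoord i j x + x i • moveCoord j i x := by
  unfold moveCoord
  module

lemma sum_moveCoord {s : Finset (Fin n)} (hi : i ∈ s) (hj : j ∈ s) :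
    ∑ k ∈ s, moveCoord i j x k = ∑ k ∈ s, x k := by
  simp [moveCoord, Finset.sum_add_distrib, ← Finset.mul_sum, hi, hj]

lemma moveCoord_mem_stdSlab (hi : (i : ℕ) < p) (hj : (j : ℕ) < p) (hij : i ≠ j)
    (hx : x ∈ stdSlab n p r) : moveCoord i j x ∈ stdSlab n p r := by
  refine ⟨fun k hk => ?_, fun k hk => ?_, ?_⟩
  · rcases eq_or_ne k i with rfl | hki
    · exact (moveCoord_apply_left hij).ge
    rcases eq_or_ne k j with rfl | hkj
    · exact (moveCoord_apply_right hij).symm ▸ add_nonneg (hx.1 i hi) (hx.1 k hj)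
    · exact (moveCoord_apply_of_ne hki hkj).symm ▸ hx.1 k hk
  · have hki : k ≠ i := by rintro rfl; omega
    have hkj : k ≠ j := by rintro rfl; omega
    exact (moveCoord_apply_of_ne hki hkj).symm ▸ hx.2.1 k hk
  · rw [sum_moveCoord (by simpa using hi) (by simpa using hj)]
    exact hx.2.2

lemma prod_moveCoord (hj : (j : ℕ) < p) (hij : i ≠ j) :
    ∏ k ∈ Finset.univ.filter (fun k : Fin n => (k : ℕ) < p ∧ k ≠ i), moveCoord i j x k =
      (x i + x j) *
        ∏ k ∈ Finset.univ.filter (fun k : Fin n => (k : ℕ) < p ∧ k ≠ i ∧ k ≠ j), x k := by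
  rw [← Finset.mul_prod_erase _ _ (a := j) (by simp [hj, hij.symm]), moveCoord_apply_right hij]
  congr 1
  refine Finset.prod_congr (by grind) fun k hk => ?_
  obtain ⟨-, -, hki, hkj⟩ := Finset.mem_filter.1 hk
  exact moveCoord_apply_of_ne hki hkj

lemma mul_moveCoord_le_faceIntegral (hu : ConvexFnOn (stdSlab n p r) u)
    (hpn : p ≤ n) (hi : (i : ℕ) < p) (hj : (j : ℕ) < p) (hij : i ≠ j)
    (hx : x ∈ stdSlab n p (r / 2)) :
    ENNReal.ofReal (2 ^ (p - 1) * r ^ (n - p) * ((x i + x j) *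
        ∏ k ∈ Finset.univ.filter (fun k : Fin n => (k : ℕ) < p ∧ k ≠ i ∧ k ≠ j), x k)) *
        u (moveCoord i j x) ≤ faceIntegral n p r i u := by
  rw [← prod_moveCoord hj hij]
  exact mul_le_faceIntegral_of_apply_eq_zero hu hpn hi (moveCoord_mem_stdSlab hi hj hij hx)
    (moveCoord_apply_left hij)

end Slab

theorem boundary_mean_value_estimate_general {n p : ℕ} (hpn : p ≤ n) {r : ℝ}
    {u : (Fin n → ℝ) → ℝ≥0∞} (hu : ConvexFnOn (stdSlab n p r) u) {i j : Fin n}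
    (hi : (i : ℕ) < p) (hj : (j : ℕ) < p) (hij : i ≠ j) {x : Fin n → ℝ}
    (hx : x ∈ stdSlab n p (r / 2)) :
    ENNReal.ofReal (2 ^ (p - 1) * r ^ (n - p) * (x i + x j) ^ 2 *
        ∏ k ∈ Finset.univ.filter (fun k : Fin n => (k : ℕ) < p ∧ k ≠ i ∧ k ≠ j), x k) * u x
      ≤ ENNReal.ofReal (x j) * faceIntegral n p r i u
          + ENNReal.ofReal (x i) * faceIntegral n p r j u := by
  have hI := mul_moveCoord_le_faceIntegral hu hpn hi hj hij hx
  have hJ := mul_moveCoord_le_faceIntegral hu hpn hj hi hij.symm hx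
  simp only [and_comm (a := _ ≠ j), add_comm (x j)] at hJ
  set c := 2 ^ (p - 1) * r ^ (n - p) * ((x i + x j) *
    ∏ k ∈ Finset.univ.filter (fun k : Fin n => (k : ℕ) < p ∧ k ≠ i ∧ k ≠ j), x k) with hc
  have hconv : ENNReal.ofReal (x j + x i) * u x ≤
      ENNReal.ofReal (x j) * u (moveCoord i j x) + ENNReal.ofReal (x i) * u (moveCoord j i x) :=
    hu.ofReal_add_mul_le (stdSlab_half_subset (moveCoord_mem_stdSlab hi hj hij hx))
      (stdSlab_half_subset (moveCoord_mem_stdSlab hj hi hij.symm hx)) (hx.1 j hj) (hx.1 i hi)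
      (add_smul_eq_smul_moveCoord_add_smul_moveCoord i j x)
  calc _ = ENNReal.ofReal c * (ENNReal.ofReal (x j + x i) * u x) := by
        rw [← mul_assoc, ← ENNReal.ofReal_mul' (add_nonneg (hx.1 j hj) (hx.1 i hi)), hc]
        congr 2
        ring
    _ ≤ ENNReal.ofReal c * (ENNReal.ofReal (x j) * u (moveCoord i j x)
          + ENNReal.ofReal (x i) * u (moveCoord j i x)) := by gcongr
    _ = ENNReal.ofReal (x j) * (ENNReal.ofReal c * u (moveCoord i j x))
          + ENNReal.ofReal (x i) * (ENNReal.ofReal c * u (moveCoord j i x)) := by ring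
    _ ≤ _ := by gcongr

/-- Boundary mean value estimate: for `2 ≤ p ≤ n`, a convex
`u : Δⁿ_p(r) → [0,∞]`, `i ≠ j` among the first `p` coordinates and
`x ∈ Δⁿ_p(r/2)` with `(xᵢ,xⱼ) ≠ (0,0)` and `x_k > 0` for `k < p`, `k ≠ i, j`:
`(r/2)^{n−p} (xᵢ+xⱼ)² (∏_{k<p, k≠i,j} x_k) u(x) ≤ xⱼ ∫_{∂ᵢΔ} u dx' + xᵢ ∫_{∂ⱼΔ} u dx'`. -/
theorem boundary_mean_value_estimate (n p : ℕ) (hp : 2 ≤ p) (hpn : p ≤ n)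
    (r : ℝ) (hr : 0 < r) (u : (Fin n → ℝ) → ℝ≥0∞)
    (hu : ConvexFnOn (stdSlab n p r) u) (i j : Fin n)
    (hi : (i : ℕ) < p) (hj : (j : ℕ) < p) (hij : i ≠ j) :
    ∀ x ∈ stdSlab n p (r / 2), ¬(x i = 0 ∧ x j = 0) →
      (∀ k : Fin n, (k : ℕ) < p → k ≠ i → k ≠ j → 0 < x k) →
      ENNReal.ofReal ((r / 2) ^ (n - p) * (x i + x j) ^ 2 *
          ∏ k ∈ Finset.univ.filter (fun k : Fin n => (k : ℕ) < p ∧ k ≠ i ∧ k ≠ j), x k)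
          * u x
        ≤ ENNReal.ofReal (x j) * faceIntegral n p r i u
            + ENNReal.ofReal (x i) * faceIntegral n p r j u := by
  intro x hx _ _
  have hconst : (r / 2) ^ (n - p) ≤ 2 ^ (p - 1) * r ^ (n - p) :=
    (pow_le_pow_left₀ (by positivity) (half_le_self hr.le) _).trans
      (le_mul_of_one_le_left (by positivity) (one_le_pow₀ one_le_two))
  refine le_trans ?_ (boundary_mean_value_estimate_general hpn hu hi hj hij hx)
  gcongr
  exact Finset.prod_nonneg fun k hk => hx.1 k (Finset.mem_filter.1 hk).2.1
end
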